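/- (De Giorgi–Poincaré lemma.) There exists a constant γ > 0 depending only on n such that the following holds: for every y ∈ ℝⁿ, every r > 0, every continuously differentiable function u : B_r(y) → ℝ with ∫_{B_r(y)} |∇u| dx < ∞, and all real numbers k < l, one has (l−k) · |A_{k,r}| · |B_r(y) ∖ A_{l,r}| ≤ γ r^{n+1} ∫_{A_{l,r} ∖ A_{k,r}} |∇u(x)| dx, where A_{m,r} := {x ∈ B_r(y) : u(x) < m}. -/

import Mathlib

open MeasureTheory Metric Set

noncomputable section

/-!
Join a point `x` of the ball where `u ≤ k` to a point `z` where `l ≤ u`. From the last time `u ≤ k`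
before `u` first reaches `l`, up to that moment, the segment runs inside `{k < u < l}`, so `l - k`
is at most `|z - x|` times the integral of `|∇u| 1_{k < u < l}` over the unit-time parametrization
of the segment. Integrate over all pairs `(x, z)` and exchange the order of integration: at a fixed
time `t ≥ 1/2` the substitution `z ↦ (1 - t) x + t z` has Jacobian at least `2⁻ⁿ`, and for
`t ≤ 1/2` the same holds with the roles of `x` and `z` exchanged.
-/

theorem exists_Icc_subset_mapsTo_Ioo {α β : Type*} [ConditionallyCompleteLinearOrder α]
    [TopologicalSpace α] [OrderTopology α] [LinearOrder β] [TopologicalSpace β]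
    [OrderClosedTopology β] {φ : α → β} {a b : α} {k l : β} (hab : a ≤ b)
    (hφ : ContinuousOn φ (Icc a b)) (ha : φ a ≤ k) (hb : l ≤ φ b) :
    ∃ c d, c ≤ d ∧ Icc c d ⊆ Icc a b ∧ φ c ≤ k ∧ l ≤ φ d ∧ MapsTo φ (Ioo c d) (Ioo k l) := by
  have isCompact_inter {d : α} (hd : d ≤ b) {t : Set β} (ht : IsClosed t) :
      IsCompact (Icc a d ∩ φ ⁻¹' t) :=
    isCompact_Icc.of_isClosed_subset
      ((hφ.mono (Icc_subset_Icc_right hd)).preimage_isClosed_of_isClosed isClosed_Icc ht)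
      inter_subset_left
  obtain ⟨d, ⟨hd, hld⟩, d_least⟩ :=
    (isCompact_inter le_rfl isClosed_Ici).exists_isLeast ⟨b, right_mem_Icc.2 hab, hb⟩
  obtain ⟨c, ⟨hc, hck⟩, c_greatest⟩ :=
    (isCompact_inter hd.2 isClosed_Iic).exists_isGreatest ⟨a, left_mem_Icc.2 hd.1, ha⟩
  refine ⟨c, d, hc.2, Icc_subset_Icc hc.1 hd.2, hck, hld, fun t ht ↦ ⟨?_, ?_⟩⟩
  · by_contra! h
    exact (c_greatest ⟨⟨hc.1.trans ht.1.le, ht.2.le⟩, h⟩).not_gt ht.1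
  · by_contra! h
    exact (d_least ⟨⟨hc.1.trans ht.1.le, ht.2.le.trans hd.2⟩, h⟩).not_gt ht.2

theorem ofReal_sub_le_setLIntegral_enorm_deriv {φ : ℝ → ℝ} {a b k l : ℝ} (hab : a ≤ b)
    (hφ : ContDiffOn ℝ 1 φ (Icc a b)) (ha : φ a ≤ k) (hb : l ≤ φ b) :
    ENNReal.ofReal (l - k) ≤ ∫⁻ t in Icc a b ∩ φ ⁻¹' Ioo k l, ‖deriv φ t‖ₑ := by
  obtain ⟨c, d, hcd, hsub, hc, hd, hmaps⟩ :=
    exists_Icc_subset_mapsTo_Ioo hab hφ.continuousOn ha hb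
  calc ENNReal.ofReal (l - k)
      ≤ ENNReal.ofReal (φ d - φ c) := by gcongr
    _ ≤ ‖φ d - φ c‖ₑ := Real.ofReal_le_enorm _
    _ ≤ ∫⁻ t in Icc c d, ‖deriv φ t‖ₑ :=
        enorm_sub_le_lintegral_deriv_of_contDiffOn_Icc (hφ.mono hsub) hcd
    _ = ∫⁻ t in Ioo c d, ‖deriv φ t‖ₑ := by rw [restrict_Ioo_eq_restrict_Icc]
    _ ≤ ∫⁻ t in Icc a b ∩ φ ⁻¹' Ioo k l, ‖deriv φ t‖ₑ :=
        lintegral_mono_set (subset_inter (Ioo_subset_Icc_self.trans hsub) hmaps)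

theorem measurableSet_inter_preimage_of_continuousOn {α β : Type*} [TopologicalSpace α]
    [MeasurableSpace α] [OpensMeasurableSpace α] [TopologicalSpace β] [MeasurableSpace β]
    [BorelSpace β] {f : α → β} {s : Set α} {t : Set β} (hf : ContinuousOn f s)
    (hs : MeasurableSet s) (ht : MeasurableSet t) : MeasurableSet (s ∩ f ⁻¹' t) := by
  rw [← Subtype.image_preimage_coe]
  exact hs.subtype_image (hf.domRestrict.measurable ht)

section Segment

open AffineMap Module

variable {E : Type*} [NormedAddCommGroup E] [NormedSpace ℝ E]

theorem ofReal_sub_le_edist_mul_lintegral_lineMap {u : E → ℝ} {s : Set E} {k l : ℝ} {x z : E}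
    (hs : Convex ℝ s) (hso : IsOpen s) (hu : ContDiffOn ℝ 1 u s) (hx : x ∈ s) (hz : z ∈ s)
    (hxk : u x ≤ k) (hzl : l ≤ u z) :
    ENNReal.ofReal (l - k) ≤ edist z x * ∫⁻ t in Icc (0 : ℝ) 1,
      (s ∩ u ⁻¹' Ioo k l).indicator (‖fderiv ℝ u ·‖ₑ) (lineMap x z t) := by
  set φ : ℝ → ℝ := u ∘ lineMap x z
  set crossing := Icc (0 : ℝ) 1 ∩ φ ⁻¹' Ioo k l
  have segment_subset : MapsTo (lineMap x z) (Icc (0 : ℝ) 1) s := hs.mapsTo_lineMap hx hz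
  have hφ : ContDiffOn ℝ 1 φ (Icc 0 1) :=
    hu.comp (contDiff_lineMap x z).contDiffOn segment_subset
  have deriv_φ {t : ℝ} (ht : t ∈ Icc (0 : ℝ) 1) :
      deriv φ t = fderiv ℝ u (lineMap x z t) (z - x) :=
    ((hu.differentiableOn one_ne_zero).differentiableAt
      (hso.mem_nhds (segment_subset ht))).hasFDerivAt.comp_hasDerivAt t hasDerivAt_lineMap |>.deriv
  have crossing_meas : MeasurableSet crossing :=
    measurableSet_inter_preimage_of_continuousOn hφ.continuousOn measurableSet_Icc
      measurableSet_Ioo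
  calc ENNReal.ofReal (l - k)
      ≤ ∫⁻ t in crossing, ‖deriv φ t‖ₑ :=
        ofReal_sub_le_setLIntegral_enorm_deriv zero_le_one hφ (by simpa [φ]) (by simpa [φ])
    _ ≤ ∫⁻ t in crossing, edist z x *
          (s ∩ u ⁻¹' Ioo k l).indicator (‖fderiv ℝ u ·‖ₑ) (lineMap x z t) := by
        refine setLIntegral_mono' crossing_meas fun t ⟨ht, htkl⟩ ↦ ?_
        have mem_band : lineMap x z t ∈ s ∩ u ⁻¹' Ioo k l := ⟨segment_subset ht, htkl⟩
        rw [indicator_of_mem mem_band, deriv_φ ht, edist_eq_enorm_sub, mul_comm]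
        exact ContinuousLinearMap.le_opENorm _ _
    _ ≤ ∫⁻ t in Icc (0 : ℝ) 1, edist z x *
          (s ∩ u ⁻¹' Ioo k l).indicator (‖fderiv ℝ u ·‖ₑ) (lineMap x z t) :=
        lintegral_mono_set inter_subset_left
    _ = _ := lintegral_const_mul' _ _ (edist_ne_top z x)

variable [FiniteDimensional ℝ E] [MeasurableSpace E] [BorelSpace E] (μ : Measure E)
  [μ.IsAddHaarMeasure]

theorem lintegral_comp_lineMap (g : E → ENNReal) (x : E) {t : ℝ} (ht : t ≠ 0) :
    ∫⁻ z, g (lineMap x z t) ∂μ = ENNReal.ofReal |(t ^ finrank ℝ E)⁻¹| * ∫⁻ z, g z ∂μ := by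
  calc ∫⁻ z, g (lineMap x z t) ∂μ
      = ∫⁻ z, g (t • z + x) ∂μ := lintegral_sub_right_eq_self (fun z ↦ g (t • z + x)) x
    _ = ∫⁻ z, g (z + x) ∂(μ.map (t • ·)) :=
        ((measurableEmbedding_const_smul₀ ht).lintegral_map (fun z ↦ g (z + x))).symm
    _ = ENNReal.ofReal |(t ^ finrank ℝ E)⁻¹| * ∫⁻ z, g z ∂μ := by
        rw [Measure.map_addHaar_smul μ ht, lintegral_smul_measure, smul_eq_mul,
          lintegral_add_right_eq_self]

theorem lintegral_comp_lineMap_le (g : E → ENNReal) (x : E) {t : ℝ} (ht : 1 / 2 ≤ t) :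
    ∫⁻ z, g (lineMap x z t) ∂μ ≤ 2 ^ finrank ℝ E * ∫⁻ z, g z ∂μ := by
  have ht_pos : 0 < t := by linarith
  have inv_le_two : t⁻¹ ≤ 2 := (inv_le_comm₀ ht_pos two_pos).2 (by linarith)
  rw [lintegral_comp_lineMap μ g x ht_pos.ne', abs_of_pos (by positivity), ← inv_pow,
    ENNReal.ofReal_pow (by positivity)]
  gcongr
  exact (ENNReal.ofReal_le_ofReal inv_le_two).trans_eq (ENNReal.ofReal_ofNat 2)

theorem setLIntegral_setLIntegral_comp_lineMap_le {g : E → ENNReal} (hg : Measurable g)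
    (s : Set E) (t : ℝ) :
    ∫⁻ x in s, ∫⁻ z in s, g (lineMap x z t) ∂μ ∂μ ≤ 2 ^ finrank ℝ E * (∫⁻ x, g x ∂μ) * μ s := by
  have of_half_le {τ : ℝ} (hτ : 1 / 2 ≤ τ) :
      ∫⁻ x in s, ∫⁻ z in s, g (lineMap x z τ) ∂μ ∂μ ≤
        2 ^ finrank ℝ E * (∫⁻ x, g x ∂μ) * μ s := by
    rw [← setLIntegral_const]
    exact lintegral_mono fun x ↦
      (setLIntegral_le_lintegral _ _).trans (lintegral_comp_lineMap_le μ g x hτ)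
  rcases le_total (1 / 2) t with ht | ht
  · exact of_half_le ht
  · rw [lintegral_lintegral_swap (f := fun x z ↦ g (lineMap x z t))
      (hg.comp (by simp only [lineMap_apply_module]; fun_prop)).aemeasurable]
    simpa only [lineMap_apply_one_sub] using of_half_le (τ := 1 - t) (by linarith)

theorem setLIntegral_setLIntegral_lintegral_lineMap_le {g : E → ENNReal} (hg : Measurable g)
    (s : Set E) :
    ∫⁻ x in s, ∫⁻ z in s, (∫⁻ t in Icc (0 : ℝ) 1, g (lineMap x z t)) ∂μ ∂μ ≤
      2 ^ finrank ℝ E * (∫⁻ x, g x ∂μ) * μ s := by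
  have hmeas : Measurable fun p : (E × ℝ) × E ↦ g (lineMap p.1.1 p.2 p.1.2) :=
    hg.comp (by simp only [lineMap_apply_module]; fun_prop)
  calc ∫⁻ x in s, ∫⁻ z in s, (∫⁻ t in Icc (0 : ℝ) 1, g (lineMap x z t)) ∂μ ∂μ
      = ∫⁻ x in s, (∫⁻ t in Icc (0 : ℝ) 1, ∫⁻ z in s, g (lineMap x z t) ∂μ) ∂μ :=
        lintegral_congr fun x ↦ lintegral_lintegral_swap
          (hmeas.comp (f := fun p : E × ℝ ↦ ((x, p.2), p.1)) (by fun_prop)).aemeasurable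
    _ = ∫⁻ t in Icc (0 : ℝ) 1, ∫⁻ x in s, ∫⁻ z in s, g (lineMap x z t) ∂μ ∂μ :=
        lintegral_lintegral_swap hmeas.lintegral_prod_right'.aemeasurable
    _ ≤ ∫⁻ _ in Icc (0 : ℝ) 1, 2 ^ finrank ℝ E * (∫⁻ x, g x ∂μ) * μ s :=
        lintegral_mono fun t ↦ setLIntegral_setLIntegral_comp_lineMap_le μ hg s t
    _ = 2 ^ finrank ℝ E * (∫⁻ x, g x ∂μ) * μ s := by simp

theorem de_giorgi_poincare_lintegral {s : Set E} (hs : Convex ℝ s) (hso : IsOpen s) {u : E → ℝ}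
    (hu : ContDiffOn ℝ 1 u s) (k l : ℝ) :
    ENNReal.ofReal (l - k) * μ (s ∩ u ⁻¹' Iic k) * μ (s ∩ u ⁻¹' Ici l) ≤
      2 ^ finrank ℝ E * ediam s * μ s * ∫⁻ x in s ∩ u ⁻¹' Ioo k l, ‖fderiv ℝ u x‖ₑ ∂μ := by
  have level_meas {t : Set ℝ} (ht : MeasurableSet t) : MeasurableSet (s ∩ u ⁻¹' t) :=
    measurableSet_inter_preimage_of_continuousOn hu.continuousOn hso.measurableSet ht
  set g : E → ENNReal := (s ∩ u ⁻¹' Ioo k l).indicator (‖fderiv ℝ u ·‖ₑ)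
  have hg : Measurable g := (measurable_fderiv ℝ u).enorm.indicator (level_meas measurableSet_Ioo)
  calc ENNReal.ofReal (l - k) * μ (s ∩ u ⁻¹' Iic k) * μ (s ∩ u ⁻¹' Ici l)
      = ∫⁻ _ in s ∩ u ⁻¹' Iic k, ∫⁻ _ in s ∩ u ⁻¹' Ici l, ENNReal.ofReal (l - k) ∂μ ∂μ := by
        simp only [setLIntegral_const, mul_right_comm]
    _ ≤ ∫⁻ x in s ∩ u ⁻¹' Iic k, ∫⁻ z in s ∩ u ⁻¹' Ici l,
          (∫⁻ t in Icc (0 : ℝ) 1, ediam s * g (lineMap x z t)) ∂μ ∂μ := by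
        refine setLIntegral_mono' (level_meas measurableSet_Iic) fun _ hx ↦
          setLIntegral_mono' (level_meas measurableSet_Ici) fun _ hz ↦ ?_
        -- The factor stays inside the integral so that an unbounded `s` needs no special treatment.
        grw [← lintegral_const_mul_le, ← edist_le_ediam_of_mem hz.1 hx.1]
        exact ofReal_sub_le_edist_mul_lintegral_lineMap hs hso hu hx.1 hz.1 hx.2 hz.2
    _ ≤ ∫⁻ x in s, ∫⁻ z in s, (∫⁻ t in Icc (0 : ℝ) 1, ediam s * g (lineMap x z t)) ∂μ ∂μ :=
        (lintegral_mono_set inter_subset_left).trans <|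
          lintegral_mono fun _ ↦ lintegral_mono_set inter_subset_left
    _ ≤ 2 ^ finrank ℝ E * (∫⁻ x, ediam s * g x ∂μ) * μ s :=
        setLIntegral_setLIntegral_lintegral_lineMap_le μ (hg.const_mul _) s
    _ = 2 ^ finrank ℝ E * ediam s * μ s *
          ∫⁻ x in s ∩ u ⁻¹' Ioo k l, ‖fderiv ℝ u x‖ₑ ∂μ := by
        rw [lintegral_const_mul _ hg, lintegral_indicator (level_meas measurableSet_Ioo)]
        ring

theorem de_giorgi_poincare_lintegral_ball {y : E} {r : ℝ} (hr : 0 < r) {u : E → ℝ}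
    (hu : ContDiffOn ℝ 1 u (ball y r)) (k l : ℝ) :
    ENNReal.ofReal (l - k) * μ (ball y r ∩ u ⁻¹' Iic k) * μ (ball y r ∩ u ⁻¹' Ici l) ≤
      2 ^ (finrank ℝ E + 1) * μ (ball 0 1) * ENNReal.ofReal r ^ (finrank ℝ E + 1) *
        ∫⁻ x in ball y r ∩ u ⁻¹' Ioo k l, ‖fderiv ℝ u x‖ₑ ∂μ := by
  have ediam_le : ediam (ball y r) ≤ 2 * ENNReal.ofReal r := by
    rw [← eball_ofReal]
    exact ediam_eball_le
  grw [de_giorgi_poincare_lintegral μ (convex_ball y r) isOpen_ball hu, ediam_le]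
  rw [Measure.addHaar_ball_of_pos μ y hr, ENNReal.ofReal_pow hr.le]
  exact le_of_eq (by ring)

end Segment

theorem de_giorgi_poincare_general {E : Type*} [NormedAddCommGroup E] [NormedSpace ℝ E]
    [FiniteDimensional ℝ E] [MeasurableSpace E] [BorelSpace E] (μ : Measure E)
    [μ.IsAddHaarMeasure] {y : E} {r : ℝ} (hr : 0 < r) {u : E → ℝ}
    (hu : ContDiffOn ℝ 1 u (ball y r)) (k l : ℝ)
    (hint : IntegrableOn (fun x ↦ ‖fderiv ℝ u x‖)
      ({x ∈ ball y r | u x < l} \ {x ∈ ball y r | u x < k}) μ) :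
    (l - k) * μ.real {x ∈ ball y r | u x < k} * μ.real (ball y r \ {x ∈ ball y r | u x < l}) ≤
      2 ^ (Module.finrank ℝ E + 1) * μ.real (ball 0 1) * r ^ (Module.finrank ℝ E + 1) *
        ∫ x in {x ∈ ball y r | u x < l} \ {x ∈ ball y r | u x < k}, ‖fderiv ℝ u x‖ ∂μ := by
  set band := {x ∈ ball y r | u x < l} \ {x ∈ ball y r | u x < k}
  have sub_band : ball y r ∩ u ⁻¹' Ioo k l ⊆ band :=
    fun x hx ↦ ⟨⟨hx.1, hx.2.2⟩, fun h ↦ hx.2.1.not_gt h.2⟩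
  have key : ENNReal.ofReal (l - k) * μ {x ∈ ball y r | u x < k} *
      μ (ball y r \ {x ∈ ball y r | u x < l}) ≤
      2 ^ (Module.finrank ℝ E + 1) * μ (ball 0 1) *
        ENNReal.ofReal r ^ (Module.finrank ℝ E + 1) * ∫⁻ x in band, ‖fderiv ℝ u x‖ₑ ∂μ := by
    grw [← sub_band, ← de_giorgi_poincare_lintegral_ball μ hr hu]
    gcongr
    · exact fun x hx ↦ ⟨hx.1, hx.2.le⟩
    · exact fun x hx ↦ ⟨hx.1, not_lt.1 fun h ↦ hx.2 ⟨hx.1, h⟩⟩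
  have integral_finite : ∫⁻ x in band, ‖fderiv ℝ u x‖ₑ ∂μ ≠ ⊤ := by
    simpa only [enorm_norm] using hint.2.ne
  have ball_finite : μ (ball 0 1) ≠ ⊤ := measure_ball_lt_top.ne
  have key_real := ENNReal.toReal_mono (by finiteness) key
  simp only [ENNReal.toReal_mul, ENNReal.toReal_pow, ENNReal.toReal_ofNat,
    ENNReal.toReal_ofReal', max_eq_left hr.le] at key_real
  rw [integral_norm_eq_lintegral_enorm (measurable_fderiv ℝ u).aestronglyMeasurable]
  refine le_trans ?_ key_real
  simp only [Measure.real]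
  gcongr
  exact le_max_left _ _

/-- the De Giorgi–Poincaré lemma, with
`A_{m,r} = {x ∈ B_r(y) : u(x) < m}`. -/
theorem de_giorgi_poincare (n : ℕ) :
    ∃ γ > (0:ℝ),
      ∀ (y : EuclideanSpace ℝ (Fin n)) (r : ℝ), 0 < r →
        ∀ u : EuclideanSpace ℝ (Fin n) → ℝ,
          ContDiffOn ℝ 1 u (Metric.ball y r) →
          IntegrableOn (fun x => ‖gradient u x‖) (Metric.ball y r) →
          ∀ k l : ℝ, k < l →
            (l - k) * (volume {x ∈ Metric.ball y r | u x < k}).toReal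
                * (volume (Metric.ball y r \ {x ∈ Metric.ball y r | u x < l})).toReal
              ≤ γ * r ^ (n + 1)
                * ∫ x in {x ∈ Metric.ball y r | u x < l} \
                    {x ∈ Metric.ball y r | u x < k}, ‖gradient u x‖ := by
  refine ⟨2 ^ (n + 1) * volume.real (ball (0 : EuclideanSpace ℝ (Fin n)) 1), mul_pos (by positivity)
    (ENNReal.toReal_pos (measure_ball_pos _ _ one_pos).ne' measure_ball_lt_top.ne),
    fun y r hr u hu hint k l _ ↦ ?_⟩
  simpa [gradient, Measure.real] using de_giorgi_poincare_general volume hr hu k l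
    (by simpa [gradient] using hint.mono_set fun x hx ↦ hx.1.1)

end
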